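/- In the online Ramsey game with targets red C₄ and blue P₆, consider the position in which the five edges v₁v₂, v₂v₃, v₃v₄, v₄v₅, v₅v₆ of a path on six distinct vertices have been colored red, red, red, red, blue respectively (case R1). From this position Builder can force a red copy of C₄ or a blue copy of P₆ within at most 6 additional rounds, so within at most 11 rounds in total. -/

import Mathlib

open SimpleGraph

/-- The set `S` of edges of the infinite complete graph on `ℕ` contains a copy of
the graph `G`: there is an injective map of the vertices of `G` into `ℕ` sending
every edge of `G` into `S`. -/
def HasCopy {V : Type*} (G : SimpleGraph V) (S : Set (Sym2 ℕ)) : Prop :=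
  ∃ f : V → ℕ, Function.Injective f ∧ ∀ a b, G.Adj a b → s(f a, f b) ∈ S

/-- `BuilderWinsIn G H R B r` means: in the online Ramsey game with targets a red copy
of `G` and a blue copy of `H`, from the position in which the edges in `R` have been
colored red and the edges in `B` have been colored blue, Builder has a strategy that
guarantees, against every Painter strategy, that within at most `r` further rounds the
colored edges contain a red copy of `G` or a blue copy of `H`.  (In each round Builder
chooses a previously unchosen non-loop edge of the infinite complete graph on `ℕ`, and
Painter immediately colors it red or blue; so Builder wins within `r + 1` rounds iff he
has already won, or he can choose an edge such that whichever color Painter gives it,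
he can win within `r` further rounds.) -/
def BuilderWinsIn {V W : Type*} (G : SimpleGraph V) (H : SimpleGraph W) :
    Set (Sym2 ℕ) → Set (Sym2 ℕ) → ℕ → Prop
  | R, B, 0 => HasCopy G R ∨ HasCopy H B
  | R, B, (r + 1) => HasCopy G R ∨ HasCopy H B ∨
      ∃ e : Sym2 ℕ, ¬ e.IsDiag ∧ e ∉ R ∧ e ∉ B ∧
        BuilderWinsIn G H (insert e R) B r ∧ BuilderWinsIn G H R (insert e B) r

/-- The online size Ramsey number `ř(G, H)`: the least `t` such that, starting from the
empty position, Builder can force a red copy of `G` or a blue copy of `H` within at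
most `t` rounds. -/
noncomputable def onlineRamsey {V W : Type*} (G : SimpleGraph V) (H : SimpleGraph W) : ℕ :=
  sInf {t | BuilderWinsIn G H ∅ ∅ t}

/-!
Call an edge a threat if coloring it red would complete a red `C₄`; Painter has to color it
blue. Number the path `0, …, 5`. The threats `03` and `14` leave blue paths `0–3` and `1–4–5`,
and Builder plays `05`. If it is blue, `3–0–5–4–1` is a blue `P₅` whose ends have the common red
neighbour `2`, and for a new vertex `6` the edges `16`, `36`, each of which extends it to a blue
`P₆`, cannot both be red. If it is red, the threat `25` leaves blue paths `0–3` and `1–4–5–2`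
whose ends are joined by the red edges `01` and `23`, so that the edges `02`, `13`, each of
which joins the two paths to a blue `P₆`, cannot both be red.
-/

section Copies

variable {V : Type*} {G : SimpleGraph V} {S : Set (Sym2 ℕ)}

theorem HasCopy.map (h : HasCopy G S) {f : ℕ → ℕ} (hf : f.Injective) :
    HasCopy G (Sym2.map f '' S) := by
  obtain ⟨φ, hφ, hS⟩ := h
  exact ⟨f ∘ φ, hf.comp hφ, fun a b hab ↦ ⟨s(φ a, φ b), hS a b hab, rfl⟩⟩

theorem hasCopy_cycleGraph {n : ℕ} {f : Fin (n + 1) → ℕ} (hf : f.Injective)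
    (hS : ∀ i, s(f i, f (i + 1)) ∈ S) : HasCopy (cycleGraph (n + 1)) S := by
  refine ⟨f, hf, fun a b hab ↦ ?_⟩
  cases n with
  | zero => exact Subsingleton.elim (α := Fin 1) (a + 1) b ▸ hS a
  | succ n =>
    rcases cycleGraph_adj.1 hab with h | h
    · rw [Sym2.eq_swap, sub_eq_iff_eq_add'.1 h]
      exact hS b
    · rw [sub_eq_iff_eq_add'.1 h]
      exact hS a

theorem hasCopy_pathGraph {n : ℕ} {f : Fin (n + 1) → ℕ} (hf : f.Injective)
    (hS : ∀ i : Fin n, s(f i.castSucc, f i.succ) ∈ S) : HasCopy (pathGraph (n + 1)) S := by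
  have step (a b : Fin (n + 1)) (h : a.val + 1 = b.val) : s(f a, f b) ∈ S := by
    have := hS ⟨a, by omega⟩
    rwa [show Fin.succ ⟨a, _⟩ = b from Fin.ext h] at this
  refine ⟨f, hf, fun a b hab ↦ ?_⟩
  rcases pathGraph_adj.1 hab with h | h
  · exact step a b h
  · rw [Sym2.eq_swap]
    exact step b a h

end Copies

/-- The edge `e` is a legal move for Builder in the position with red edges `R` and blue
edges `B`. -/
def IsLegalMove (R B : Set (Sym2 ℕ)) (e : Sym2 ℕ) : Prop :=
  ¬ e.IsDiag ∧ e ∉ R ∧ e ∉ B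

theorem IsLegalMove.map {R B : Set (Sym2 ℕ)} {e : Sym2 ℕ} (he : IsLegalMove R B e) {f : ℕ → ℕ}
    (hf : f.Injective) : IsLegalMove (Sym2.map f '' R) (Sym2.map f '' B) (e.map f) := by
  simpa only [IsLegalMove, Sym2.isDiag_map hf, (Sym2.map.injective hf).mem_set_image] using he

namespace BuilderWinsIn

variable {V W : Type*} {G : SimpleGraph V} {H : SimpleGraph W} {R B : Set (Sym2 ℕ)} {r : ℕ}
  {e e' : Sym2 ℕ}

theorem of_red (h : HasCopy G R) : BuilderWinsIn G H R B r := by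
  cases r <;> exact .inl h

theorem of_blue (h : HasCopy H B) : BuilderWinsIn G H R B r := by
  cases r with
  | zero => exact .inr h
  | succ r => exact .inr (.inl h)

theorem of_move (he : IsLegalMove R B e) (red : BuilderWinsIn G H (insert e R) B r)
    (blue : BuilderWinsIn G H R (insert e B) r) : BuilderWinsIn G H R B (r + 1) :=
  .inr (.inr ⟨e, he.1, he.2.1, he.2.2, red, blue⟩)

theorem of_threat (he : IsLegalMove R B e) (red : HasCopy G (insert e R))
    (blue : BuilderWinsIn G H R (insert e B) r) : BuilderWinsIn G H R B (r + 1) :=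
  of_move he (of_red red) blue

theorem of_double_threat (he : IsLegalMove R B e) (he' : IsLegalMove (insert e R) B e')
    (red : HasCopy G (insert e' (insert e R))) (blue : HasCopy H (insert e B))
    (blue' : HasCopy H (insert e' B)) : BuilderWinsIn G H R B (r + 2) :=
  of_move he (of_threat he' red (of_blue blue')) (of_blue blue)

theorem map (h : BuilderWinsIn G H R B r) {f : ℕ → ℕ} (hf : f.Injective) :
    BuilderWinsIn G H (Sym2.map f '' R) (Sym2.map f '' B) r := by
  induction r generalizing R B with
  | zero => exact h.imp (·.map hf) (·.map hf)
  | succ r ih =>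
    rcases h with h | h | ⟨e, hdiag, hR, hB, red, blue⟩
    · exact of_red (h.map hf)
    · exact of_blue (h.map hf)
    · refine of_move (IsLegalMove.map ⟨hdiag, hR, hB⟩ hf) ?_ ?_
      · simpa only [Set.image_insert_eq] using ih red
      · simpa only [Set.image_insert_eq] using ih blue

end BuilderWinsIn

theorem builderWinsIn_red_path_blue_edge :
    BuilderWinsIn (cycleGraph 4) (pathGraph 6)
      {s(0, 1), s(1, 2), s(2, 3), s(3, 4)} {s(4, 5)} 6 := by
  refine .of_threat (e := s(0, 3)) (by simp [IsLegalMove])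
    (hasCopy_cycleGraph (f := ![0, 1, 2, 3]) (by decide) (by simp [Fin.forall_fin_succ])) ?_
  refine .of_threat (e := s(1, 4)) (by simp [IsLegalMove])
    (hasCopy_cycleGraph (f := ![1, 2, 3, 4]) (by decide) (by simp [Fin.forall_fin_succ])) ?_
  refine .of_move (e := s(0, 5)) (by simp [IsLegalMove]) ?red ?blue
  case red =>
    refine .of_threat (e := s(2, 5)) (by simp [IsLegalMove])
      (hasCopy_cycleGraph (f := ![0, 1, 2, 5]) (by decide) (by simp [Fin.forall_fin_succ])) ?_
    exact .of_double_threat (e := s(0, 2)) (e' := s(1, 3))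
      (by simp [IsLegalMove]) (by simp [IsLegalMove])
      (hasCopy_cycleGraph (f := ![0, 1, 3, 2]) (by decide) (by simp [Fin.forall_fin_succ]))
      (hasCopy_pathGraph (f := ![1, 4, 5, 2, 0, 3]) (by decide) (by simp [Fin.forall_fin_succ]))
      (hasCopy_pathGraph (f := ![0, 3, 1, 4, 5, 2]) (by decide) (by simp [Fin.forall_fin_succ]))
  case blue =>
    exact .of_double_threat (e := s(1, 6)) (e' := s(3, 6))
      (by simp [IsLegalMove]) (by simp [IsLegalMove])
      (hasCopy_cycleGraph (f := ![1, 2, 3, 6]) (by decide) (by simp [Fin.forall_fin_succ]))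
      (hasCopy_pathGraph (f := ![3, 0, 5, 4, 1, 6]) (by decide) (by simp [Fin.forall_fin_succ]))
      (hasCopy_pathGraph (f := ![6, 3, 0, 5, 4, 1]) (by decide) (by simp [Fin.forall_fin_succ]))

/-- Case `R1`: in the online Ramsey game with targets red `C₄` and blue `P₆`,
from the position in which the five edges `v₁v₂, v₂v₃, v₃v₄, v₄v₅, v₅v₆` of a path on
six distinct vertices have been colored red, red, red, red, blue respectively,
Builder can force a red copy of `C₄` or a blue copy of `P₆` within at most 6 additional
rounds (so within at most 11 rounds in total). -/
theorem builder_wins_case_R1 (v : Fin 6 → ℕ) (hv : Function.Injective v) :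
    BuilderWinsIn (cycleGraph 4) (pathGraph 6)
      {s(v 0, v 1), s(v 1, v 2), s(v 2, v 3), s(v 3, v 4)}
      {s(v 4, v 5)} 6 := by
  have := Equiv.Perm.isMultiplyPretransitive ℕ 6
  obtain ⟨g, hg⟩ :=
    MulAction.exists_smul_eq (Equiv.Perm ℕ) (Fin.valEmbedding : Fin 6 ↪ ℕ) ⟨v, hv⟩
  have hgv (i : Fin 6) : g i = v i := DFunLike.congr_fun hg i
  simpa [Set.image_insert_eq, ← hgv] using builderWinsIn_red_path_blue_edge.map g.injective
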